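/- Let ℓ > 0 and T > 0, let f : [0, ℓ] × [0, T] → ℝ³ be continuously differentiable, and let 𝐪 = (q₀, q) : [0, ℓ] × [0, T] → ℝ⁴ be continuously differentiable with |𝐪(x,t)| = 1 for all (x,t). Let R : [0, ℓ] × [0, T] → ℝ^{3×3} be the rotation matrix parametrized by 𝐪, i.e. R = (q₀² − ⟨q, q⟩) I₃ + 2 q qᵀ + 2 q₀ q̂ pointwise. Let ∂_z denote the partial derivative with respect to either the first (spatial) or the second (time) variable, the same choice on both sides. Then ∂_z 𝐪 = 𝒰(f) 𝐪 holds on (0, ℓ) × (0, T) if and only if ∂_z R = R f̂ holds on (0, ℓ) × (0, T). -/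

import Mathlib

open Matrix

attribute [local instance] Matrix.normedAddCommGroup Matrix.normedSpace

/-- The skew-symmetric matrix of the cross product: `hat w ζ = w × ζ`. -/
def hat (w : Fin 3 → ℝ) : Matrix (Fin 3) (Fin 3) ℝ :=
  !![0, -w 2, w 1; w 2, 0, -w 0; -w 1, w 0, 0]

/-- The matrix `𝒰(w) = (1/2) [[0, −wᵀ], [w, −ŵ]]` acting on quaternions `ℝ⁴`. -/
noncomputable def Umat (w : Fin 3 → ℝ) : Matrix (Fin 4) (Fin 4) ℝ :=
  (1 / 2 : ℝ) •
    !![0, -w 0, -w 1, -w 2;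
       w 0, 0, w 2, -w 1;
       w 1, -w 2, 0, w 0;
       w 2, w 1, -w 0, 0]

/-- The rotation matrix parametrized by the quaternion `𝐪 = (q₀, q)`,
`R = (q₀² − ⟨q,q⟩) I₃ + 2 q qᵀ + 2 q₀ q̂`, where `q₀ = 𝐪 0` and `q = (𝐪 1, 𝐪 2, 𝐪 3)`. -/
noncomputable def rotOfQuat (Q : Fin 4 → ℝ) : Matrix (Fin 3) (Fin 3) ℝ :=
  letI q : Fin 3 → ℝ := fun i => Q i.succ
  (Q 0 ^ 2 - q ⬝ᵥ q) • (1 : Matrix (Fin 3) (Fin 3) ℝ)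
    + (2 : ℝ) • vecMulVec q q + (2 * Q 0) • hat q

/-!
Identify `ℝ⁴` with the quaternions. Then `Umat w *ᵥ q = ½ q w` and `rotOfQuat q *ᵥ ζ = q ζ q̄`.
Differentiating `|q|² = c` shows that `∂q` is orthogonal to `q`, so `∂q = ½ q w'` for the purely
imaginary `w' = 2 q⁻¹ ∂q`, and the product rule turns `∂(q ζ q̄)` into
`q (½ (w' ζ - ζ w')) q̄ = q (w' × ζ) q̄`, that is, `∂R = R ŵ'`. Since `R` is invertible and hatting
is injective, both equations say that `w'` is the prescribed angular velocity.
-/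

theorem fderiv_bilinear_self_apply {𝕜 E F G : Type*} [NontriviallyNormedField 𝕜] [CompleteSpace 𝕜]
    [NormedAddCommGroup E] [NormedSpace 𝕜 E] [NormedAddCommGroup F] [NormedSpace 𝕜 F]
    [FiniteDimensional 𝕜 F] [NormedAddCommGroup G] [NormedSpace 𝕜 G]
    (B : F →ₗ[𝕜] F →ₗ[𝕜] G) {g : E → F} {p : E} (hg : DifferentiableAt 𝕜 g p) (d : E) :
    fderiv 𝕜 (fun x => B (g x) (g x)) p d =
      B (g p) (fderiv 𝕜 g p d) + B (fderiv 𝕜 g p d) (g p) :=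
  DFunLike.congr_fun (B.toContinuousBilinearMap.fderiv_of_bilinear hg hg) d

theorem dotProduct_fderiv_eq_zero_of_eventually_const {E ι : Type*} [NormedAddCommGroup E]
    [NormedSpace ℝ E] [Fintype ι] {g : E → ι → ℝ} {p : E} {c : ℝ}
    (hg : DifferentiableAt ℝ g p) (hc : ∀ᶠ x in nhds p, g x ⬝ᵥ g x = c) (d : E) :
    g p ⬝ᵥ fderiv ℝ g p d = 0 := by
  have hconst : fderiv ℝ (fun x => g x ⬝ᵥ g x) p d = 0 := by
    have hc' : (fun x => g x ⬝ᵥ g x) =ᶠ[nhds p] fun _ => c := hc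
    simp [hc'.fderiv_eq]
  have hprod : fderiv ℝ (fun x => g x ⬝ᵥ g x) p d =
      g p ⬝ᵥ fderiv ℝ g p d + fderiv ℝ g p d ⬝ᵥ g p :=
    fderiv_bilinear_self_apply (dotProductBilin ℝ ℝ) hg d
  rw [dotProduct_comm (fderiv ℝ g p d)] at hprod
  linarith

theorem vecTail_smul {M α : Type*} [SMul M α] {n : ℕ} (c : M) (v : Fin (n + 1) → α) :
    vecTail (c • v) = c • vecTail v :=
  rfl

theorem hat_add (v w : Fin 3 → ℝ) : hat (v + w) = hat v + hat w := by
  ext i j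
  fin_cases i <;> fin_cases j <;> simp [hat] <;> ring

theorem hat_smul (c : ℝ) (w : Fin 3 → ℝ) : hat (c • w) = c • hat w := by
  ext i j
  fin_cases i <;> fin_cases j <;> simp [hat]

theorem hat_injective : Function.Injective hat := by
  intro v w h
  ext i
  fin_cases i
  · simpa [hat] using congr_fun₂ h 2 1
  · simpa [hat] using congr_fun₂ h 0 2
  · simpa [hat] using congr_fun₂ h 1 0

/-- A bilinear map with diagonal `rotOfQuat`, used to differentiate `rotOfQuat` by the product
rule. It is not symmetric: each quadratic monomial of `rotOfQuat` is polarized in the order in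
which it is written there. -/
noncomputable def rotOfQuatBilin :
    (Fin 4 → ℝ) →ₗ[ℝ] (Fin 4 → ℝ) →ₗ[ℝ] Matrix (Fin 3) (Fin 3) ℝ :=
  LinearMap.mk₂ ℝ
    (fun q v => (q 0 * v 0 - vecTail q ⬝ᵥ vecTail v) • (1 : Matrix (Fin 3) (Fin 3) ℝ)
      + (2 : ℝ) • vecMulVec (vecTail q) (vecTail v) + (2 * q 0) • hat (vecTail v))
    (fun q q' v => by
      simp only [tail_add, Pi.add_apply, add_dotProduct, add_vecMulVec]
      module)
    (fun c q v => by
      simp only [vecTail_smul, Pi.smul_apply, smul_eq_mul, smul_dotProduct, smul_vecMulVec]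
      module)
    (fun q v v' => by
      simp only [tail_add, Pi.add_apply, dotProduct_add, vecMulVec_add, hat_add]
      module)
    (fun c q v => by
      simp only [vecTail_smul, Pi.smul_apply, smul_eq_mul, dotProduct_smul, vecMulVec_smul,
        hat_smul]
      module)

theorem rotOfQuatBilin_apply (q v : Fin 4 → ℝ) :
    rotOfQuatBilin q v =
      !![q 0 * v 0 + q 1 * v 1 - q 2 * v 2 - q 3 * v 3, 2 * (q 1 * v 2 - q 0 * v 3),
          2 * (q 1 * v 3 + q 0 * v 2);
        2 * (q 2 * v 1 + q 0 * v 3), q 0 * v 0 - q 1 * v 1 + q 2 * v 2 - q 3 * v 3,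
          2 * (q 2 * v 3 - q 0 * v 1);
        2 * (q 3 * v 1 - q 0 * v 2), 2 * (q 3 * v 2 + q 0 * v 1),
          q 0 * v 0 - q 1 * v 1 - q 2 * v 2 + q 3 * v 3] := by
  ext i j
  fin_cases i <;> fin_cases j <;>
    simp [rotOfQuatBilin, hat, vecTail, vecMulVec_apply, dotProduct, Fin.sum_univ_three] <;> ring

theorem rotOfQuatBilin_self (q : Fin 4 → ℝ) : rotOfQuatBilin q q = rotOfQuat q := by
  simp only [rotOfQuatBilin, LinearMap.mk₂_apply, ← sq]
  rfl

theorem rotOfQuatBilin_Umat_mulVec (w : Fin 3 → ℝ) (q : Fin 4 → ℝ) :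
    rotOfQuatBilin q (Umat w *ᵥ q) + rotOfQuatBilin (Umat w *ᵥ q) q = rotOfQuat q * hat w := by
  rw [← rotOfQuatBilin_self]
  ext i j
  fin_cases i <;> fin_cases j <;>
    simp [rotOfQuatBilin_apply, Umat, hat, mul_apply, dotProduct, Fin.sum_univ_three,
      Fin.sum_univ_four] <;> ring

theorem rotOfQuat_transpose_mul_self (q : Fin 4 → ℝ) :
    (rotOfQuat q)ᵀ * rotOfQuat q = (q ⬝ᵥ q) ^ 2 • (1 : Matrix (Fin 3) (Fin 3) ℝ) := by
  rw [← rotOfQuatBilin_self]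
  ext i j
  fin_cases i <;> fin_cases j <;>
    simp [rotOfQuatBilin_apply, mul_apply, dotProduct, Fin.sum_univ_three, Fin.sum_univ_four] <;>
    ring

theorem rotOfQuat_mul_right_injective {n : Type*} {q : Fin 4 → ℝ} (hq : q ⬝ᵥ q ≠ 0) :
    Function.Injective fun A : Matrix (Fin 3) n ℝ => rotOfQuat q * A := by
  intro A B h
  have hsmul : (q ⬝ᵥ q) ^ 2 • A = (q ⬝ᵥ q) ^ 2 • B := by
    simpa [← Matrix.mul_assoc, rotOfQuat_transpose_mul_self] using congr_arg ((rotOfQuat q)ᵀ * ·) h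
  exact smul_right_injective _ (pow_ne_zero 2 hq) hsmul

/-- The angular velocity, in the body frame, of a quaternion curve passing through `q` with
velocity `v`: the vector part of the quaternion `2 q̄ v`. It has the usual meaning for unit `q`
and is scaled by `q ⬝ᵥ q` otherwise. -/
def angularVelocity (q v : Fin 4 → ℝ) : Fin 3 → ℝ :=
  (2 : ℝ) • ![q 0 * v 1 - v 0 * q 1 - (q 2 * v 3 - q 3 * v 2),
    q 0 * v 2 - v 0 * q 2 - (q 3 * v 1 - q 1 * v 3),
    q 0 * v 3 - v 0 * q 3 - (q 1 * v 2 - q 2 * v 1)]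

theorem Umat_angularVelocity_mulVec (q v : Fin 4 → ℝ) :
    Umat (angularVelocity q v) *ᵥ q = (q ⬝ᵥ q) • v - (q ⬝ᵥ v) • q := by
  ext i
  fin_cases i <;> simp [Umat, angularVelocity, dotProduct, Fin.sum_univ_four] <;> ring

theorem exists_Umat_mulVec_eq {q v : Fin 4 → ℝ} (hq : q ⬝ᵥ q ≠ 0) (hqv : q ⬝ᵥ v = 0) :
    ∃ w, Umat w *ᵥ q = v :=
  ⟨angularVelocity q ((q ⬝ᵥ q)⁻¹ • v), by
    simp [Umat_angularVelocity_mulVec, hqv, smul_smul, mul_inv_cancel₀ hq]⟩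

section Dynamics

variable {E : Type*} [NormedAddCommGroup E] [NormedSpace ℝ E] {Q : E → Fin 4 → ℝ}

theorem fderiv_rotOfQuat_comp_apply {p : E} (hQ : DifferentiableAt ℝ Q p) (d : E) :
    fderiv ℝ (fun x => rotOfQuat (Q x)) p d =
      rotOfQuatBilin (Q p) (fderiv ℝ Q p d) + rotOfQuatBilin (fderiv ℝ Q p d) (Q p) := by
  simp only [← rotOfQuatBilin_self]
  exact fderiv_bilinear_self_apply rotOfQuatBilin hQ d

theorem fderiv_eq_Umat_mulVec_iff {p : E} {c : ℝ} (hc : c ≠ 0) (hQ : DifferentiableAt ℝ Q p)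
    (hnorm : ∀ᶠ x in nhds p, Q x ⬝ᵥ Q x = c) (d : E) (w : Fin 3 → ℝ) :
    fderiv ℝ Q p d = Umat w *ᵥ Q p ↔
      fderiv ℝ (fun x => rotOfQuat (Q x)) p d = rotOfQuat (Q p) * hat w := by
  have hq : Q p ⬝ᵥ Q p ≠ 0 := hnorm.self_of_nhds.trans_ne hc
  obtain ⟨w', hw'⟩ :=
    exists_Umat_mulVec_eq hq (dotProduct_fderiv_eq_zero_of_eventually_const hQ hnorm d)
  rw [fderiv_rotOfQuat_comp_apply hQ, ← hw']
  refine ⟨fun h => by rw [h, rotOfQuatBilin_Umat_mulVec], fun h => ?_⟩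
  rw [rotOfQuatBilin_Umat_mulVec] at h
  rw [hat_injective (rotOfQuat_mul_right_injective hq h)]

theorem stmt_11_general {s : Set E} (hs : IsOpen s) {f : E → Fin 3 → ℝ}
    (hQ : DifferentiableOn ℝ Q s) {c : ℝ} (hc : c ≠ 0) (hnorm : ∀ p ∈ s, Q p ⬝ᵥ Q p = c)
    {R : E → Matrix (Fin 3) (Fin 3) ℝ} (hR : ∀ p ∈ s, R p = rotOfQuat (Q p)) (d : E) :
    (∀ p ∈ s, fderiv ℝ Q p d = Umat (f p) *ᵥ Q p) ↔
      ∀ p ∈ s, fderiv ℝ R p d = R p * hat (f p) := by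
  refine forall₂_congr fun p hp => ?_
  have hsp : s ∈ nhds p := hs.mem_nhds hp
  have hRs : R =ᶠ[nhds p] fun x => rotOfQuat (Q x) := Filter.eventually_of_mem hsp hR
  rw [hRs.fderiv_eq, hR p hp]
  exact fderiv_eq_Umat_mulVec_iff hc (hQ.differentiableAt hsp)
    (Filter.eventually_of_mem hsp hnorm) d (f p)

end Dynamics

/-- Unit-quaternion dynamics `∂_z 𝐪 = 𝒰(f) 𝐪` are equivalent to the rotation-matrix
dynamics `∂_z R = R f̂`, the derivative being taken with respect to either the first
(spatial) or the second (time) variable, the same choice on both sides. -/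
theorem stmt_11 (ℓ T : ℝ) (hℓ : 0 < ℓ) (hT : 0 < T)
    (f : ℝ × ℝ → (Fin 3 → ℝ)) (hf : ContDiffOn ℝ 1 f (Set.Icc 0 ℓ ×ˢ Set.Icc 0 T))
    (Q : ℝ × ℝ → (Fin 4 → ℝ)) (hQ : ContDiffOn ℝ 1 Q (Set.Icc 0 ℓ ×ˢ Set.Icc 0 T))
    (hunit : ∀ p ∈ Set.Icc (0 : ℝ) ℓ ×ˢ Set.Icc (0 : ℝ) T, Q p ⬝ᵥ Q p = 1)
    (R : ℝ × ℝ → Matrix (Fin 3) (Fin 3) ℝ) (hR : ∀ p, R p = rotOfQuat (Q p))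
    (d : ℝ × ℝ) (hd : d = ((1 : ℝ), (0 : ℝ)) ∨ d = ((0 : ℝ), (1 : ℝ))) :
    (∀ p ∈ Set.Ioo (0 : ℝ) ℓ ×ˢ Set.Ioo (0 : ℝ) T,
        fderiv ℝ Q p d = Umat (f p) *ᵥ Q p) ↔
    (∀ p ∈ Set.Ioo (0 : ℝ) ℓ ×ˢ Set.Ioo (0 : ℝ) T,
        fderiv ℝ R p d = R p * hat (f p)) := by
  have hsub : Set.Ioo 0 ℓ ×ˢ Set.Ioo 0 T ⊆ Set.Icc 0 ℓ ×ˢ Set.Icc 0 T :=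
    Set.prod_mono Set.Ioo_subset_Icc_self Set.Ioo_subset_Icc_self
  exact stmt_11_general (isOpen_Ioo.prod isOpen_Ioo) ((hQ.differentiableOn one_ne_zero).mono hsub)
    one_ne_zero (fun p hp => hunit p (hsub hp)) (fun p _ => hR p) d
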